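/- arXiv:2003.08856 — 4 statements merged into one kernel-verified Lean document; each statement's English description precedes it below -/
import Mathlib

section
/- Let (G_s)_{s≥1} be a (deterministic) growing graph sequence as in the context, let t≥1, let u≠v be vertices in [t], let (ℓ_{k,t'})_{k≥0,t'≥t} be a birth-threshold array, and let K̲_{t,t'} := K_{t,t'} − M_G for some fixed integer M_G≥0, where K_{t,t'} := max( 2⌊(log log t − log(1∨log(t'/t)))/|log(τ−2)|⌋ , 2 ) for a fixed τ∈(2,3). Then: (i) if there exist t'≥t and a t'-present (u,v)-path of length at most 2·K̲_{t,t'}, then there exists t'≥t such that either E_bad^{(q)}(k,t') holds for some q∈{u,v} and some 0≤k≤K̲_{t,t'}, or E_short^{(u,v)}(n,t') holds for some 0≤n≤2·K̲_{t,t'}; (ii) for any k≥2 and t'>t, if E_bad^{(u)}(k,t') holds then there exist a vertex x with 1≤x<ℓ_{k,t'}, an index 1≤i≤k−1, and a t'-present path (u=π_0,π_1,…,π_k=x) of pairwise distinct vertices with π_i=t' and ℓ_{j,t'}≤π_j≤t' for all j<k; (iii) for any n≥2 and t'>t, if E_short^{(u,v)}(n,t') holds then, for some ordering (q_1,q_2)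 of (u,v), either there exist a vertex x with ℓ_{⌊n/2⌋,t'}≤x≤t'−1, an index 1≤i≤⌊n/2⌋−1, a t'-present path (q_1=π_0,…,π_{⌊n/2⌋}=x) of distinct vertices with π_i=t' and ℓ_{j,t'}≤π_j≤t' for all j<⌊n/2⌋, and a t'-present path (q_2=σ_0,…,σ_{⌈n/2⌉}=x) with ℓ_{j,t'}≤σ_j≤t' for all j<⌈n/2⌉, the two paths sharing no vertex except x; or there exist a t'-present path of length ⌊n/2⌋ from q_1 to t' and a t'-present path of length ⌈n/2⌉ from q_2 to t' satisfying the same birth constraints (ℓ_{j,t'} ≤ j-th vertex ≤ t' for j before the endpoint) and sharing no vertex except t'. -/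
open MeasureTheory ProbabilityTheory Real Filter Finset

noncomputable section

/-- `K_{t,t'}`. -/
def Kfun (τ : ℝ) (t t' : ℕ) : ℕ :=
  max (2 * ⌊(Real.log (Real.log t) - Real.log (max 1 (Real.log ((t' : ℝ) / t)))) /
        |Real.log (τ - 2)|⌋₊) 2

/-- a growing (multi)graph sequence, recorded through its adjacency relations
`A s u v`: the vertex set of `G_s` is `[s]`, `G_s ⊆ G_{s+1}`, and every new edge is
incident to the newly arrived vertex. -/
def GrowingGraph (A : ℕ → ℕ → ℕ → Prop) : Prop :=
  (∀ s u v, A s u v → A s v u) ∧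
  (∀ s u v, A s u v → 1 ≤ u ∧ u ≤ s ∧ 1 ≤ v ∧ v ≤ s) ∧
  (∀ s u v, A s u v → A (s + 1) u v) ∧
  (∀ s u v, A (s + 1) u v → ¬A s u v → u = s + 1 ∨ v = s + 1)

/-- `pth 0, …, pth n` is a `t'`-present path: pairwise distinct vertices of `[t']`,
consecutive ones adjacent in `G_{t'}`. -/
def PresPath (A : ℕ → ℕ → ℕ → Prop) (t' n : ℕ) (pth : ℕ → ℕ) : Prop :=
  (∀ i ≤ n, ∀ j ≤ n, pth i = pth j → i = j) ∧
  (∀ i ≤ n, 1 ≤ pth i ∧ pth i ≤ t') ∧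
  (∀ i < n, A t' (pth i) (pth (i + 1)))

/-- graph distance at time `t'` (`⊤` if not connected). -/
def dGraph (A : ℕ → ℕ → ℕ → Prop) (t' u v : ℕ) : ENNReal :=
  ⨅ (n : ℕ) (_ : ∃ pth : ℕ → ℕ, PresPath A t' n pth ∧ pth 0 = u ∧ pth n = v), (n : ENNReal)

/-- a birth-threshold array for base time `t`. -/
def BirthArray (t : ℕ) (ℓ : ℕ → ℕ → ℕ) : Prop :=
  (∀ k t', t ≤ t' → 1 ≤ ℓ k t') ∧
  (∀ k k' t', t ≤ t' → k ≤ k' → ℓ k' t' ≤ ℓ k t') ∧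
  (∀ k t₁ t₂, t ≤ t₁ → t₁ ≤ t₂ → ℓ k t₂ ≤ ℓ k t₁) ∧
  (∀ t', t ≤ t' → ℓ 0 t' ≤ t)

/-- a `(k,t')`-bad `q`-path which is `t'`-present. -/
def BadPath (A : ℕ → ℕ → ℕ → Prop) (ℓ : ℕ → ℕ → ℕ) (q k t' : ℕ) (pth : ℕ → ℕ) : Prop :=
  PresPath A t' k pth ∧ pth 0 = q ∧ (∀ j < k, ℓ j t' ≤ pth j) ∧ pth k < ℓ k t'

/-- an `(n,t')`-good `(u,v)`-path which is `t'`-present. -/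
def GoodPath (A : ℕ → ℕ → ℕ → Prop) (ℓ : ℕ → ℕ → ℕ) (u v n t' : ℕ) (pth : ℕ → ℕ) : Prop :=
  PresPath A t' n pth ∧ pth 0 = u ∧ pth n = v ∧
  ∀ j ≤ n / 2, ℓ j t' ≤ min (pth j) (pth (n - j))

/-- the event `E_bad^{(q)}(k,t')` (for base time `t`). -/
def Ebad (A : ℕ → ℕ → ℕ → Prop) (ℓ : ℕ → ℕ → ℕ) (t q k t' : ℕ) : Prop :=
  if k = 0 then q < ℓ 0 t'
  else if t' = t then ∃ pth : ℕ → ℕ, BadPath A ℓ q k t pth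
  else (∃ pth : ℕ → ℕ, BadPath A ℓ q k t' pth) ∧
    ∀ i ≤ k, ¬∃ pth : ℕ → ℕ, BadPath A ℓ q i (t' - 1) pth

/-- the event `E_short^{(u,v)}(n,t')` (for base time `t`). -/
def Eshort (A : ℕ → ℕ → ℕ → Prop) (ℓ : ℕ → ℕ → ℕ) (t u v n t' : ℕ) : Prop :=
  if n = 0 then u = v
  else if t' = t then ∃ pth : ℕ → ℕ, GoodPath A ℓ u v n t pth
  else (∃ pth : ℕ → ℕ, GoodPath A ℓ u v n t' pth) ∧
    ∀ s < t', ¬∃ pth : ℕ → ℕ, PresPath A s n pth ∧ pth 0 = u ∧ pth n = v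

/-- the path weight `p(pth_0,…,pth_k)` of condition `PA(γ)` (zero unless the vertices
are pairwise distinct). -/
def pfun (ν γ : ℝ) (l : List ℕ) : ℝ :=
  if l.Nodup then
    ((l.zip l.tail).map (fun q =>
      ν * ((min q.1 q.2 : ℕ) : ℝ) ^ (-γ) * ((max q.1 q.2 : ℕ) : ℝ) ^ (γ - 1))).prod
  else 0

/-- condition `PA(γ)` with constant `ν` for a random growing graph sequence. -/
def PAgamma {Ω : Type} [MeasurableSpace Ω] (μ : Measure Ω)
    (A : Ω → ℕ → ℕ → ℕ → Prop) (γ ν : ℝ) : Prop :=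
  ∀ t' : ℕ, ∀ l : List ℕ, l.Nodup → (∀ v ∈ l, 1 ≤ v ∧ v ≤ t') →
    μ {ω | l.Chain' (A ω t')} ≤ ENNReal.ofReal (pfun ν γ l)

/-- `f_{[i,k)}^{(t,t')}(y,x)`: expected number (upper bound) of good paths on the
segment `[i,k)` from `y` to `x`, with thresholds `ℓt j = ℓ_{j,t'}`. -/
def ffun (ν γ : ℝ) (ℓt : ℕ → ℕ) (t' i k y x : ℕ) : ℝ :=
  ∑ g ∈ Fintype.piFinset (fun _ : Fin (k - i - 1) => Finset.Icc 1 t'),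
    if ∀ j : Fin (k - i - 1), ℓt (i + 1 + (j : ℕ)) ≤ g j then
      pfun ν γ (y :: (List.ofFn g ++ [x]))
    else 0

/-- the pair `(α_{[0,j)}, β_{[0,j)})`. -/
def abRec (c ν γ : ℝ) (ℓt : ℕ → ℕ) (t' : ℕ) : ℕ → ℝ × ℝ
  | 0 => (0, 0)
  | 1 => (ν * (ℓt 0 : ℝ) ^ (γ - 1), ν * (ℓt 0 : ℝ) ^ (-γ))
  | (j + 2) =>
    (c * ((abRec c ν γ ℓt t' (j + 1)).1 * Real.log ((t' : ℝ) / ℓt (j + 1)) +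
        (abRec c ν γ ℓt t' (j + 1)).2 * (t' : ℝ) ^ (2 * γ - 1)),
     c * ((abRec c ν γ ℓt t' (j + 1)).1 * (ℓt (j + 1) : ℝ) ^ (1 - 2 * γ) +
        (abRec c ν γ ℓt t' (j + 1)).2 * Real.log ((t' : ℝ) / ℓt (j + 1))))

/-- the pair `(φ_{[i,i+j)}, ψ_{[i,i+j)})`. -/
def ppRec (c ν γ : ℝ) (ℓt : ℕ → ℕ) (t' i : ℕ) : ℕ → ℝ × ℝ
  | 0 => (0, 0)
  | 1 => (ν * (t' : ℝ) ^ (γ - 1), 0)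
  | (j + 2) =>
    (c * ((ppRec c ν γ ℓt t' i (j + 1)).1 * Real.log ((t' : ℝ) / ℓt (i + j + 1)) +
        (ppRec c ν γ ℓt t' i (j + 1)).2 * (t' : ℝ) ^ (2 * γ - 1)),
     c * ((ppRec c ν γ ℓt t' i (j + 1)).1 * (ℓt (i + j + 1) : ℝ) ^ (1 - 2 * γ) +
        (ppRec c ν γ ℓt t' i (j + 1)).2 * Real.log ((t' : ℝ) / ℓt (i + j + 1))))

theorem aux_pres_mono {A : ℕ → ℕ → ℕ → Prop} (hA : GrowingGraph A) {s s' n : ℕ} {p : ℕ → ℕ}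
    (h : s ≤ s') (hp : PresPath A s n p) : PresPath A s' n p := by
  induction s', h using Nat.le_induction with
  | base => exact hp
  | succ m _ ih =>
    refine ⟨ih.1, fun i hi => ?_, fun i hi => hA.2.2.1 _ _ _ (ih.2.2 i hi)⟩
    have := ih.2.1 i hi
    omega

theorem aux_pres_prefix {A : ℕ → ℕ → ℕ → Prop} {s n m : ℕ} {p : ℕ → ℕ}
    (h : m ≤ n) (hp : PresPath A s n p) : PresPath A s m p :=
  ⟨fun i hi j hj => hp.1 i (by omega) j (by omega), fun i hi => hp.2.1 i (by omega),
    fun i hi => hp.2.2 i (by omega)⟩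

theorem aux_pres_rev {A : ℕ → ℕ → ℕ → Prop} (hA : GrowingGraph A) {s n : ℕ} {p : ℕ → ℕ}
    (hp : PresPath A s n p) : PresPath A s n (fun j => p (n - j)) := by
  refine ⟨fun i hi j hj h => ?_, fun i hi => hp.2.1 _ (by omega), fun i hi => ?_⟩
  · have := hp.1 (n - i) (by omega) (n - j) (by omega) h
    omega
  · have := hA.1 _ _ _ (hp.2.2 (n - (i + 1)) (by omega))
    rwa [show n - (i + 1) + 1 = n - i by omega] at this

theorem aux_pres_pred {A : ℕ → ℕ → ℕ → Prop} (hA : GrowingGraph A) {s n : ℕ} {p : ℕ → ℕ}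
    (hs : 1 ≤ s) (hp : PresPath A s n p) (hne : ∀ i ≤ n, p i ≠ s) : PresPath A (s - 1) n p := by
  obtain ⟨r, rfl⟩ : ∃ r, s = r + 1 := ⟨s - 1, by omega⟩
  refine ⟨hp.1, fun i hi => ?_, fun i hi => ?_⟩
  · have := hp.2.1 i hi
    have := hne i hi
    omega
  · by_contra hc
    rcases hA.2.2.2 _ _ _ (hp.2.2 i hi) hc with h | h
    · exact hne i (by omega) h
    · exact hne (i + 1) (by omega) h

theorem aux_bad {A : ℕ → ℕ → ℕ → Prop} {ℓ : ℕ → ℕ → ℕ} {s n j : ℕ} {p : ℕ → ℕ}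
    (hp : PresPath A s n p) (hj : j ≤ n) (hl : p j < ℓ j s) :
    ∃ k ≤ j, BadPath A ℓ (p 0) k s p := by
  classical
  have hex : ∃ k, p k < ℓ k s := ⟨j, hl⟩
  have hle : Nat.find hex ≤ j := Nat.find_le hl
  refine ⟨Nat.find hex, hle, aux_pres_prefix (by omega) hp, rfl, fun i hi => ?_, Nat.find_spec hex⟩
  exact not_lt.1 (Nat.find_min hex hi)

theorem aux_K {τ : ℝ} {t s s' : ℕ} (ht : 1 ≤ t) (hs : t ≤ s) (h : s ≤ s') :
    Kfun τ t s' ≤ Kfun τ t s := by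
  have ht0 : (0 : ℝ) < t := by exact_mod_cast ht
  have hs0 : (0 : ℝ) < s := by exact_mod_cast (by omega : 0 < s)
  have h' : (s : ℝ) ≤ s' := by exact_mod_cast h
  have h1 : Real.log ((s : ℝ) / t) ≤ Real.log ((s' : ℝ) / t) :=
    Real.log_le_log (by positivity) (by gcongr)
  have h2 : Real.log (max 1 (Real.log ((s : ℝ) / t))) ≤
      Real.log (max 1 (Real.log ((s' : ℝ) / t))) :=
    Real.log_le_log (by positivity) (max_le_max le_rfl h1)
  unfold Kfun
  refine max_le_max ?_ le_rfl
  refine Nat.mul_le_mul_left _ (Nat.floor_le_floor ?_)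
  gcongr

theorem aux_Ebad {A : ℕ → ℕ → ℕ → Prop} {ℓ : ℕ → ℕ → ℕ} {τ : ℝ} {t q k s MG : ℕ}
    (ht : 1 ≤ t) (hs : t ≤ s) (hk : k ≤ Kfun τ t s - MG) (hb : ∃ p, BadPath A ℓ q k s p) :
    ∃ t' : ℕ, t ≤ t' ∧ ∃ k : ℕ, k ≤ Kfun τ t t' - MG ∧ Ebad A ℓ t q k t' := by
  classical
  have hex : ∃ r, t ≤ r ∧ ∃ i ≤ k, ∃ p, BadPath A ℓ q i r p := ⟨s, hs, k, le_rfl, hb⟩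
  have hle : Nat.find hex ≤ s := Nat.find_le ⟨hs, k, le_rfl, hb⟩
  have hmin := fun r => Nat.find_min hex (m := r)
  obtain ⟨htr, i, hi, p, hp⟩ := Nat.find_spec hex
  generalize Nat.find hex = r at *
  have hK := aux_K (τ := τ) ht htr hle
  refine ⟨r, htr, i, by omega, ?_⟩
  unfold Ebad
  split_ifs with h0 h1
  · subst h0
    have := hp.2.2.2
    rwa [hp.2.1] at this
  · subst h1
    exact ⟨p, hp⟩
  · refine ⟨⟨p, hp⟩, fun i' hi' hc => hmin (r - 1) (by omega) ⟨by omega, i', by omega, hc⟩⟩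

theorem aux_part3 {A : ℕ → ℕ → ℕ → Prop} (hA : GrowingGraph A) {ℓ : ℕ → ℕ → ℕ}
    {u v n t' i : ℕ} {p : ℕ → ℕ} (hg : GoodPath A ℓ u v n t' p)
    (hi1 : 1 ≤ i) (hi : i ≤ n / 2) (hpi : p i = t') :
    ((∃ x : ℕ, ℓ (n / 2) t' ≤ x ∧ x ≤ t' - 1 ∧ ∃ i : ℕ, 1 ≤ i ∧ i ≤ n / 2 - 1 ∧
            ∃ pth sg : ℕ → ℕ,
              PresPath A t' (n / 2) pth ∧ pth 0 = u ∧ pth (n / 2) = x ∧ pth i = t' ∧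
                (∀ j < n / 2, ℓ j t' ≤ pth j ∧ pth j ≤ t') ∧
              PresPath A t' ((n + 1) / 2) sg ∧ sg 0 = v ∧ sg ((n + 1) / 2) = x ∧
                (∀ j < (n + 1) / 2, ℓ j t' ≤ sg j ∧ sg j ≤ t') ∧
              (∀ a : ℕ, a ≤ n / 2 → ∀ b : ℕ, b ≤ (n + 1) / 2 →
                pth a = sg b → pth a = x)) ∨
         (∃ pth sg : ℕ → ℕ,
            PresPath A t' (n / 2) pth ∧ pth 0 = u ∧ pth (n / 2) = t' ∧
              (∀ j < n / 2, ℓ j t' ≤ pth j ∧ pth j ≤ t') ∧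
            PresPath A t' ((n + 1) / 2) sg ∧ sg 0 = v ∧ sg ((n + 1) / 2) = t' ∧
              (∀ j < (n + 1) / 2, ℓ j t' ≤ sg j ∧ sg j ≤ t') ∧
            (∀ a : ℕ, a ≤ n / 2 → ∀ b : ℕ, b ≤ (n + 1) / 2 →
              pth a = sg b → pth a = t'))) := by
  obtain ⟨hp, h0, hn, hl⟩ := hg
  have P1 : PresPath A t' (n / 2) p := aux_pres_prefix (by omega) hp
  have P2 : PresPath A t' ((n + 1) / 2) (fun j => p (n - j)) :=
    aux_pres_prefix (by omega) (aux_pres_rev hA hp)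
  have L1 : ∀ j < n / 2, ℓ j t' ≤ p j ∧ p j ≤ t' := fun j hj =>
    ⟨(hl j (by omega)).trans (min_le_left _ _), (hp.2.1 j (by omega)).2⟩
  have L2 : ∀ j < (n + 1) / 2, ℓ j t' ≤ p (n - j) ∧ p (n - j) ≤ t' := fun j hj =>
    ⟨(hl j (by omega)).trans (min_le_right _ _), (hp.2.1 (n - j) (by omega)).2⟩
  have E : n - (n + 1) / 2 = n / 2 := by omega
  have D : ∀ a : ℕ, a ≤ n / 2 → ∀ b : ℕ, b ≤ (n + 1) / 2 → p a = p (n - b) → p a = p (n / 2) := by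
    intro a ha b hb h
    have := hp.1 a (by omega) (n - b) (by omega) h
    rw [show a = n / 2 by omega]
  rcases hi.lt_or_eq with hlt | heq
  · left
    refine ⟨p (n / 2), (hl _ le_rfl).trans (min_le_left _ _), ?_, i, hi1, by omega, p,
      fun j => p (n - j), P1, h0, rfl, hpi, L1, P2, hn, by simp only [E], L2, D⟩
    have h1 := hp.2.1 (n / 2) (by omega)
    have h2 : p (n / 2) ≠ t' := fun h => by
      have := hp.1 i (by omega) (n / 2) (by omega) (by omega)
      omega
    omega
  · right
    subst heq
    rw [hpi] at D
    exact ⟨p, fun j => p (n - j), P1, h0, hpi, L1, P2, hn, by simp only [E, hpi], L2, D⟩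

/-- **Proposition 3.9** (good/bad path decomposition, deterministic form):
(i) a too-short present `(u,v)`-path at some `t' ≥ t` forces one of the events
`E_bad` or `E_short`; (ii) decomposition of `E_bad(k,t')` for `t' > t` through the
newly arrived vertex `t'`; (iii) decomposition of `E_short(n,t')` for `t' > t`. -/
theorem good_bad_path_decomposition
    (A : ℕ → ℕ → ℕ → Prop) (hA : GrowingGraph A)
    (τ : ℝ) (hτ1 : 2 < τ) (hτ2 : τ < 3)
    (t : ℕ) (ht : 1 ≤ t) (u v : ℕ)
    (hu : u ∈ Finset.Icc 1 t) (hv : v ∈ Finset.Icc 1 t) (huv : u ≠ v)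
    (ℓ : ℕ → ℕ → ℕ) (hℓ : BirthArray t ℓ) (MG : ℕ) :
    -- (i)
    ((∃ t' : ℕ, t ≤ t' ∧ ∃ n : ℕ, n ≤ 2 * (Kfun τ t t' - MG) ∧
        ∃ pth : ℕ → ℕ, PresPath A t' n pth ∧ pth 0 = u ∧ pth n = v) →
      ∃ t' : ℕ, t ≤ t' ∧
        ((∃ q : ℕ, (q = u ∨ q = v) ∧ ∃ k : ℕ, k ≤ Kfun τ t t' - MG ∧ Ebad A ℓ t q k t') ∨
         (∃ n : ℕ, n ≤ 2 * (Kfun τ t t' - MG) ∧ Eshort A ℓ t u v n t'))) ∧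
    -- (ii)
    (∀ k t' : ℕ, 2 ≤ k → t < t' → Ebad A ℓ t u k t' →
      ∃ x : ℕ, 1 ≤ x ∧ x < ℓ k t' ∧ ∃ i : ℕ, 1 ≤ i ∧ i ≤ k - 1 ∧
        ∃ pth : ℕ → ℕ, PresPath A t' k pth ∧ pth 0 = u ∧ pth k = x ∧ pth i = t' ∧
          ∀ j < k, ℓ j t' ≤ pth j ∧ pth j ≤ t') ∧
    -- (iii)
    (∀ n t' : ℕ, 2 ≤ n → t < t' → Eshort A ℓ t u v n t' →
      ∃ q₁ q₂ : ℕ, ((q₁ = u ∧ q₂ = v) ∨ (q₁ = v ∧ q₂ = u)) ∧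
        ((∃ x : ℕ, ℓ (n / 2) t' ≤ x ∧ x ≤ t' - 1 ∧ ∃ i : ℕ, 1 ≤ i ∧ i ≤ n / 2 - 1 ∧
            ∃ pth sg : ℕ → ℕ,
              PresPath A t' (n / 2) pth ∧ pth 0 = q₁ ∧ pth (n / 2) = x ∧ pth i = t' ∧
                (∀ j < n / 2, ℓ j t' ≤ pth j ∧ pth j ≤ t') ∧
              PresPath A t' ((n + 1) / 2) sg ∧ sg 0 = q₂ ∧ sg ((n + 1) / 2) = x ∧
                (∀ j < (n + 1) / 2, ℓ j t' ≤ sg j ∧ sg j ≤ t') ∧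
              (∀ a : ℕ, a ≤ n / 2 → ∀ b : ℕ, b ≤ (n + 1) / 2 →
                pth a = sg b → pth a = x)) ∨
         (∃ pth sg : ℕ → ℕ,
            PresPath A t' (n / 2) pth ∧ pth 0 = q₁ ∧ pth (n / 2) = t' ∧
              (∀ j < n / 2, ℓ j t' ≤ pth j ∧ pth j ≤ t') ∧
            PresPath A t' ((n + 1) / 2) sg ∧ sg 0 = q₂ ∧ sg ((n + 1) / 2) = t' ∧
              (∀ j < (n + 1) / 2, ℓ j t' ≤ sg j ∧ sg j ≤ t') ∧
            (∀ a : ℕ, a ≤ n / 2 → ∀ b : ℕ, b ≤ (n + 1) / 2 →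
              pth a = sg b → pth a = t')))) := by
  obtain ⟨hu1, hu2⟩ := Finset.mem_Icc.1 hu
  obtain ⟨hv1, hv2⟩ := Finset.mem_Icc.1 hv
  refine ⟨?_, ?_, ?_⟩
  · rintro ⟨t', htt, n, hn, p0, hp0⟩
    classical
    have hn0 : n ≠ 0 := by
      rintro rfl
      exact huv (hp0.2.1.symm.trans hp0.2.2)
    have hex : ∃ s, ∃ p, PresPath A s n p ∧ p 0 = u ∧ p n = v := ⟨t', p0, hp0⟩
    have hle : Nat.find hex ≤ t' := Nat.find_le ⟨p0, hp0⟩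
    have hmin := fun r => Nat.find_min hex (m := r)
    obtain ⟨p, hp, hpu, hpv⟩ := Nat.find_spec hex
    generalize Nat.find hex = s at *
    have hp1 : PresPath A (max s t) n p := aux_pres_mono hA (le_max_left _ _) hp
    have hK := aux_K (τ := τ) ht (le_max_right s t) (max_le hle htt)
    by_cases hg : ∀ j ≤ n / 2, ℓ j (max s t) ≤ min (p j) (p (n - j))
    · refine ⟨max s t, le_max_right _ _, Or.inr ⟨n, by omega, ?_⟩⟩
      have hgood : GoodPath A ℓ u v n (max s t) p := ⟨hp1, hpu, hpv, hg⟩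
      unfold Eshort
      rw [if_neg hn0]
      split_ifs with h1
      · rw [h1] at hgood
        exact ⟨p, hgood⟩
      · exact ⟨⟨p, hgood⟩, fun r hr hc => hmin r (by omega) hc⟩
    · push Not at hg
      obtain ⟨j, hj, hlt⟩ := hg
      have key : ∃ q, (q = u ∨ q = v) ∧ ∃ k ≤ j, ∃ p, BadPath A ℓ q k (max s t) p := by
        rcases min_lt_iff.1 hlt with h | h
        · obtain ⟨k, hk, hb⟩ := aux_bad hp1 (by omega) h
          exact ⟨_, Or.inl hpu, k, hk, _, hb⟩
        · obtain ⟨k, hk, hb⟩ := aux_bad (j := j) (aux_pres_rev hA hp1) (by omega) h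
          exact ⟨_, Or.inr hpv, k, hk, _, hb⟩
      obtain ⟨q, hq, k, hk, hb⟩ := key
      obtain ⟨r, hr, k', hk', hE⟩ := aux_Ebad (τ := τ) (MG := MG) ht (le_max_right s t)
        (by omega : k ≤ Kfun τ t (max s t) - MG) hb
      exact ⟨r, hr, Or.inl ⟨q, hq, k', hk', hE⟩⟩
  · intro k t' hk ht' hE
    unfold Ebad at hE
    rw [if_neg (by omega), if_neg (by omega)] at hE
    obtain ⟨⟨p, hp, hp0, hl, hlk⟩, hno⟩ := hE
    by_cases hc : ∃ i ≤ k, p i = t'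
    · obtain ⟨i, hi, hpi⟩ := hc
      have h1 := hℓ.2.1 0 k t' ht'.le (by omega)
      have h2 := hℓ.2.2.2 t' ht'.le
      have hi0 : i ≠ 0 := by rintro rfl; omega
      have hik : i ≠ k := by rintro rfl; omega
      exact ⟨p k, (hp.2.1 k le_rfl).1, hlk, i, by omega, by omega, p, hp, hp0, rfl, hpi,
        fun j hj => ⟨hl j hj, (hp.2.1 j hj.le).2⟩⟩
    · push Not at hc
      have hp' := aux_pres_pred hA (by omega) hp hc
      have hm := hℓ.2.2.1 k (t' - 1) t' (by omega) (by omega)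
      obtain ⟨i, hi, hb⟩ := aux_bad (ℓ := ℓ) hp' le_rfl (by omega)
      rw [hp0] at hb
      exact absurd ⟨p, hb⟩ (hno i hi)
  · intro n t' hn ht' hE
    unfold Eshort at hE
    rw [if_neg (by omega), if_neg (by omega)] at hE
    obtain ⟨⟨p, hg⟩, hno⟩ := hE
    obtain ⟨hp, hp0, hpn, hl⟩ := id hg
    by_cases hc : ∃ i ≤ n, p i = t'
    · obtain ⟨i, hi, hpi⟩ := hc
      have hi0 : i ≠ 0 := by rintro rfl; omega
      have hin : i ≠ n := by rintro rfl; omega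
      by_cases hh : i ≤ n / 2
      · exact ⟨u, v, Or.inl ⟨rfl, rfl⟩, aux_part3 hA hg (by omega) hh hpi⟩
      · have hg' : GoodPath A ℓ v u n t' (fun j => p (n - j)) := by
          refine ⟨aux_pres_rev hA hp, hpn, by simpa using hp0, fun j hj => ?_⟩
          have := hl j hj
          simp only [show n - (n - j) = j by omega]
          rwa [min_comm]
        refine ⟨v, u, Or.inr ⟨rfl, rfl⟩, aux_part3 hA hg' (i := n - i) (by omega) (by omega) ?_⟩
        simp only [show n - (n - i) = i by omega, hpi]
    · push Not at hc
      exact absurd ⟨p, aux_pres_pred hA (by omega) hp hc, hp0, hpn⟩ (hno (t' - 1) (by omega))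

end
end

section
/- Let (G_s)_{s≥1} be a random growing graph sequence (almost surely satisfying the structural properties in the context), let t≥1, u≠v∈[t], let (ℓ_{k,t'})_{k≥0,t'≥t} be a birth-threshold array, and let K̲_{t,t'} := K_{t,t'} − M_G for a fixed integer M_G≥0, where K_{t,t'} := max( 2⌊(log log t − log(1∨log(t'/t)))/|log(τ−2)|⌋ , 2 ) for a fixed τ∈(2,3). Then P( there exists t'≥t with d_G^{(t')}(u,v) ≤ 2·K̲_{t,t'} ) ≤ Σ_{q∈{u,v}} Σ_{t'≥t} Σ_{k=0}^{K̲_{t,t'}} 1{k≥2 or t'=t}·P(E_bad^{(q)}(k,t')) + Σ_{t'≥t} Σ_{n=0}^{2K̲_{t,t'}} 1{n≥2 or t'=t}·P(E_short^{(u,v)}(n,t')), where d_G^{(t')}(u,v) denotes the minimal length of a t'-present (u,v)-path (∞ if none exists). -/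
open MeasureTheory ProbabilityTheory Real Filter Finset

noncomputable section

theorem aux_measure {Ω : Type} [MeasurableSpace Ω] (μ : Measure Ω) (t : ℕ) (N : ℕ → ℕ)
    (E : ℕ → ℕ → Ω → Prop) :
    μ {ω | ∃ t', t ≤ t' ∧ ∃ k ∈ Finset.range (N t'), (2 ≤ k ∨ t' = t) ∧ E k t' ω} ≤
      ∑' t' : ℕ, if t ≤ t' then
        ∑ k ∈ Finset.range (N t'), (if 2 ≤ k ∨ t' = t then μ {ω | E k t' ω} else 0) else 0 := by
  have h : {ω | ∃ t', t ≤ t' ∧ ∃ k ∈ Finset.range (N t'), (2 ≤ k ∨ t' = t) ∧ E k t' ω} =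
      ⋃ t', {ω | t ≤ t' ∧ ∃ k ∈ Finset.range (N t'), (2 ≤ k ∨ t' = t) ∧ E k t' ω} := by
    ext ω; simp
  rw [h]
  refine (measure_iUnion_le _).trans (ENNReal.tsum_le_tsum fun t' => ?_)
  by_cases h1 : t ≤ t'
  · rw [if_pos h1]
    have h2 : {ω | t ≤ t' ∧ ∃ k ∈ Finset.range (N t'), (2 ≤ k ∨ t' = t) ∧ E k t' ω} =
      ⋃ k ∈ Finset.range (N t'), {ω | (2 ≤ k ∨ t' = t) ∧ E k t' ω} := by
      ext ω
      simp only [h1, true_and, Set.mem_iUnion, Set.mem_setOf_eq, exists_prop]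
    rw [h2]
    refine (measure_biUnion_finset_le _ _).trans (Finset.sum_le_sum fun k _ => ?_)
    by_cases h3 : 2 ≤ k ∨ t' = t
    · rw [if_pos h3]; exact measure_mono fun ω hω => hω.2
    · rw [if_neg h3]; simp [h3]
  · simp [h1]

theorem Kfun_anti (τ : ℝ) (t a b : ℕ) (ht : 1 ≤ t) (hta : t ≤ a) (hab : a ≤ b) :
    Kfun τ t b ≤ Kfun τ t a := by
  unfold Kfun
  have h0 : (0:ℝ) < t := by exact_mod_cast ht
  have ha : (0:ℝ) < a := by exact_mod_cast (lt_of_lt_of_le ht hta)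
  have hab' : (a:ℝ) ≤ b := by exact_mod_cast hab
  have h1 : Real.log ((a:ℝ)/t) ≤ Real.log ((b:ℝ)/t) :=
    Real.log_le_log (by positivity) (by gcongr)
  have h2 : Real.log (max 1 (Real.log ((a:ℝ)/t))) ≤ Real.log (max 1 (Real.log ((b:ℝ)/t))) :=
    Real.log_le_log (by positivity) (max_le_max le_rfl h1)
  apply max_le_max _ le_rfl
  apply Nat.mul_le_mul_left
  apply Nat.floor_le_floor
  apply div_le_div_of_nonneg_right _ (abs_nonneg _)
  linarith

theorem dGraph_le {A : ℕ → ℕ → ℕ → Prop} {t' u v N : ℕ} (h : dGraph A t' u v ≤ (N : ENNReal)) :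
    ∃ n ≤ N, ∃ pth : ℕ → ℕ, PresPath A t' n pth ∧ pth 0 = u ∧ pth n = v := by
  by_contra hc
  push Not at hc
  have h1 : ((N + 1 : ℕ) : ENNReal) ≤ dGraph A t' u v := by
    unfold dGraph
    refine le_iInf₂ fun n hn => ?_
    obtain ⟨p, h1, h2, h3⟩ := hn
    have : N + 1 ≤ n := by
      by_contra h4
      exact hc n (by omega) p h1 h2 h3
    exact_mod_cast this
  have h2 := h1.trans h
  have h3 : N + 1 ≤ N := by exact_mod_cast h2
  omega

theorem GrowingGraph.mono {A : ℕ → ℕ → ℕ → Prop} (hG : GrowingGraph A) {s s' : ℕ} (h : s ≤ s')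
    {x y : ℕ} (hx : A s x y) : A s' x y := by
  induction s', h using Nat.le_induction with
  | base => exact hx
  | succ n _ ih => exact hG.2.2.1 _ _ _ ih

theorem PresPath.mono {A : ℕ → ℕ → ℕ → Prop} (hG : GrowingGraph A) {s s' n : ℕ} (h : s ≤ s')
    {p : ℕ → ℕ} (hp : PresPath A s n p) : PresPath A s' n p :=
  ⟨hp.1, fun i hi => ⟨(hp.2.1 i hi).1, (hp.2.1 i hi).2.trans h⟩,
    fun i hi => hG.mono h (hp.2.2 i hi)⟩

/-- restrict a path to one step earlier if no vertex is the newest one -/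
theorem PresPath.pred {A : ℕ → ℕ → ℕ → Prop} (hG : GrowingGraph A) {s n : ℕ}
    {p : ℕ → ℕ} (hp : PresPath A (s + 1) n p) (hs : ∀ i ≤ n, p i ≤ s) : PresPath A s n p := by
  refine ⟨hp.1, fun i hi => ⟨(hp.2.1 i hi).1, hs i hi⟩, fun i hi => ?_⟩
  by_contra hc
  have h1 := hs i hi.le
  have h2 := hs (i + 1) hi
  rcases hG.2.2.2 _ _ _ (hp.2.2 i hi) hc with h | h <;> omega

theorem PresPath.prefix_path {A : ℕ → ℕ → ℕ → Prop} {s n j : ℕ} (hj : j ≤ n)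
    {p : ℕ → ℕ} (hp : PresPath A s n p) : PresPath A s j p :=
  ⟨fun i hi k hk => hp.1 i (hi.trans hj) k (hk.trans hj), fun i hi => hp.2.1 i (hi.trans hj),
    fun i hi => hp.2.2 i (lt_of_lt_of_le hi hj)⟩

theorem PresPath.rev {A : ℕ → ℕ → ℕ → Prop} (hG : GrowingGraph A) {s n : ℕ}
    {p : ℕ → ℕ} (hp : PresPath A s n p) : PresPath A s n (fun i => p (n - i)) := by
  refine ⟨fun i hi k hk h => ?_, fun i hi => hp.2.1 _ (Nat.sub_le _ _), fun i hi => ?_⟩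
  · have := hp.1 (n - i) (Nat.sub_le _ _) (n - k) (Nat.sub_le _ _) h
    omega
  · have := hp.2.2 (n - (i + 1)) (by omega)
    rw [show n - (i + 1) + 1 = n - i by omega] at this
    exact hG.1 _ _ _ this

theorem good_or_bad {A : ℕ → ℕ → ℕ → Prop} (hG : GrowingGraph A) (ℓ : ℕ → ℕ → ℕ) {s n u v : ℕ}
    {p : ℕ → ℕ} (hp : PresPath A s n p) (h0 : p 0 = u) (hn : p n = v) :
    GoodPath A ℓ u v n s p ∨ ∃ j ≤ n / 2, ∃ q, (q = u ∨ q = v) ∧ ∃ p', BadPath A ℓ q j s p' := by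
  classical
  by_cases h : ∀ j ≤ n / 2, ℓ j s ≤ min (p j) (p (n - j))
  · exact Or.inl ⟨hp, h0, hn, h⟩
  right
  push Not at h
  have hj := Nat.find_spec h
  have hmin : ∀ i < Nat.find h, ℓ i s ≤ min (p i) (p (n - i)) := by
    intro i hi
    have := Nat.find_min h hi
    by_contra hc
    exact this ⟨by omega, by omega⟩
  generalize Nat.find h = j at hj hmin
  obtain ⟨hj1, hj2⟩ := hj
  refine ⟨j, hj1, ?_⟩
  rcases min_lt_iff.1 hj2 with h1 | h1
  · exact ⟨u, Or.inl rfl, p, hp.prefix_path (by omega), h0,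
      fun i hi => (hmin i hi).trans (min_le_left _ _), h1⟩
  · exact ⟨v, Or.inr rfl, _, (hp.rev hG).prefix_path (by omega), by simpa using hn,
      fun i hi => (hmin i hi).trans (min_le_right _ _), h1⟩

theorem pointwise_aux {A : ℕ → ℕ → ℕ → Prop} (hG : GrowingGraph A) (t u v : ℕ)
    (hu : u ∈ Finset.Icc 1 t) (hv : v ∈ Finset.Icc 1 t) (huv : u ≠ v)
    (ℓ : ℕ → ℕ → ℕ) (hℓ : BirthArray t ℓ) (K : ℕ → ℕ)
    (hK : ∀ a b, t ≤ a → a ≤ b → K b ≤ K a)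
    (h : ∃ t', t ≤ t' ∧ ∃ n ≤ 2 * K t', ∃ p : ℕ → ℕ, PresPath A t' n p ∧ p 0 = u ∧ p n = v) :
    (∃ q ∈ ({u, v} : Finset ℕ), ∃ t', t ≤ t' ∧ ∃ k ∈ Finset.range (K t' + 1),
      (2 ≤ k ∨ t' = t) ∧ Ebad A ℓ t q k t') ∨
    (∃ t', t ≤ t' ∧ ∃ n ∈ Finset.range (2 * K t' + 1),
      (2 ≤ n ∨ t' = t) ∧ Eshort A ℓ t u v n t') := by
  classical
  rw [Finset.mem_Icc] at hu hv
  have hP : ∃ t', t ≤ t' ∧ ((∃ q, (q = u ∨ q = v) ∧ ∃ k ≤ K t', ∃ p, BadPath A ℓ q k t' p) ∨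
      ∃ n ≤ 2 * K t', ∃ p : ℕ → ℕ, PresPath A t' n p ∧ p 0 = u ∧ p n = v) := by
    obtain ⟨t', h1, h2⟩ := h
    exact ⟨t', h1, Or.inr h2⟩
  have hs := Nat.find_spec hP
  have hm := fun m => Nat.find_min (m := m) hP
  generalize Nat.find hP = t' at hs hm
  obtain ⟨htt, hs⟩ := hs
  have nobad : t < t' → ∀ q, (q = u ∨ q = v) → ∀ k ≤ K (t' - 1), ¬ ∃ p, BadPath A ℓ q k (t' - 1) p :=
    fun h1 q hq k hk hp => hm (t' - 1) (by omega) ⟨by omega, Or.inl ⟨q, hq, k, hk, hp⟩⟩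
  have nopath : t < t' → ∀ n ≤ 2 * K (t' - 1), ¬ ∃ p : ℕ → ℕ, PresPath A (t' - 1) n p ∧ p 0 = u ∧ p n = v :=
    fun h1 n hn hp => hm (t' - 1) (by omega) ⟨by omega, Or.inr ⟨n, hn, hp⟩⟩
  have hK1 : t < t' → K t' ≤ K (t' - 1) := fun h1 => hK _ _ (by omega) (by omega)
  have bad_case : ∀ q, (q = u ∨ q = v) → ∀ k ≤ K t', (∃ p, BadPath A ℓ q k t' p) →
      (2 ≤ k ∨ t' = t) ∧ Ebad A ℓ t q k t' := by
    rintro q hq k hk ⟨p, hp⟩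
    have hqt : 1 ≤ q ∧ q ≤ t := by rcases hq with rfl | rfl <;> assumption
    have hk2 : 2 ≤ k ∨ t' = t := by
      by_contra hc
      push Not at hc
      have hlt : t < t' := by omega
      have hle := hK1 hlt
      have hb0 : ℓ 0 (t' - 1) ≤ q := by
        by_contra h0
        refine nobad hlt q hq 0 (Nat.zero_le _) ⟨fun _ => q, ⟨?_, ?_, ?_⟩, rfl, ?_, ?_⟩
        · intro i hi j hj _; omega
        · intro i hi; exact ⟨hqt.1, by show q ≤ t' - 1; omega⟩
        · intro i hi; omega
        · intro i hi; omega
        · show q < _; omega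
      obtain ⟨hp1, hp2, hp3, hp4⟩ := hp
      have hl := hℓ.2.2.1 k (t' - 1) t' (by omega) (by omega)
      have hk01 : k = 0 ∨ k = 1 := by omega
      rcases hk01 with rfl | rfl
      · omega
      · have hl0 := hℓ.2.1 0 1 t' htt (by omega)
        have hl1 := hℓ.2.2.2 t' htt
        refine nobad hlt q hq 1 (by omega) ⟨p, ?_, hp2, ?_, by omega⟩
        · apply PresPath.pred hG
          · rwa [show t' - 1 + 1 = t' by omega]
          · intro i hi
            have : i = 0 ∨ i = 1 := by omega
            rcases this with rfl | rfl <;> omega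
        · intro j hj
          obtain rfl : j = 0 := by omega
          omega
    refine ⟨hk2, ?_⟩
    unfold Ebad
    split_ifs with h1 h2
    · subst h1
      rw [← hp.2.1]; exact hp.2.2.2
    · subst h2; exact ⟨p, hp⟩
    · exact ⟨⟨p, hp⟩, fun i hi => nobad (by omega) q hq i (by have := hK1 (by omega); omega)⟩
  by_cases hbad : ∃ q, (q = u ∨ q = v) ∧ ∃ k ≤ K t', ∃ p, BadPath A ℓ q k t' p
  · left
    obtain ⟨q, hq, k, hk, hp⟩ := hbad
    exact ⟨q, by simpa using hq, t', htt, k, by simp; omega, bad_case q hq k hk hp⟩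
  · right
    obtain ⟨n, hn, p, hp, h0, hpn⟩ := hs.resolve_left hbad
    refine ⟨t', htt, n, by simp; omega, ?_, ?_⟩
    · by_contra hc
      push Not at hc
      have hlt : t < t' := by omega
      have hle := hK1 hlt
      refine nopath hlt n (by omega) ⟨p, ?_, h0, hpn⟩
      apply PresPath.pred hG
      · rwa [show t' - 1 + 1 = t' by omega]
      · intro i hi
        have : i = 0 ∨ i = n := by omega
        rcases this with rfl | rfl <;> omega
    · have hgood : GoodPath A ℓ u v n t' p := by
        rcases good_or_bad hG ℓ hp h0 hpn with h | ⟨j, hj, q, hq, hb⟩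
        · exact h
        · exact absurd ⟨q, hq, j, by omega, hb⟩ hbad
      unfold Eshort
      split_ifs with h1 h2
      · subst h1; omega
      · subst h2; exact ⟨p, hgood⟩
      · refine ⟨⟨p, hgood⟩, fun s hs' hex => ?_⟩
        obtain ⟨p', hp', h3⟩ := hex
        have := hK1 (by omega)
        exact nopath (by omega) n (by omega) ⟨p', hp'.mono hG (by omega), h3⟩

/-- **Corollary 3.10** (union bound over the decomposition): the probability that
the graph distance between `u` and `v` is ever at most `2K̲_{t,t'}` is bounded by
the summed probabilities of the events `E_bad` and `E_short`. -/
theorem distance_event_union_bound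
    {Ω : Type} [MeasurableSpace Ω] (μ : Measure Ω) [IsProbabilityMeasure μ]
    (A : Ω → ℕ → ℕ → ℕ → Prop) (hA : ∀ᵐ ω ∂μ, GrowingGraph (A ω))
    (τ : ℝ) (hτ1 : 2 < τ) (hτ2 : τ < 3)
    (t : ℕ) (ht : 1 ≤ t) (u v : ℕ)
    (hu : u ∈ Finset.Icc 1 t) (hv : v ∈ Finset.Icc 1 t) (huv : u ≠ v)
    (ℓ : ℕ → ℕ → ℕ) (hℓ : BirthArray t ℓ) (MG : ℕ) :
    μ {ω | ∃ t' : ℕ, t ≤ t' ∧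
        dGraph (A ω) t' u v ≤ ((2 * (Kfun τ t t' - MG) : ℕ) : ENNReal)} ≤
      (∑ q ∈ ({u, v} : Finset ℕ), ∑' t' : ℕ,
        if t ≤ t' then
          ∑ k ∈ Finset.range (Kfun τ t t' - MG + 1),
            (if 2 ≤ k ∨ t' = t then μ {ω | Ebad (A ω) ℓ t q k t'} else 0)
        else 0) +
      ∑' t' : ℕ,
        if t ≤ t' then
          ∑ n ∈ Finset.range (2 * (Kfun τ t t' - MG) + 1),
            (if 2 ≤ n ∨ t' = t then μ {ω | Eshort (A ω) ℓ t u v n t'} else 0)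
        else 0 := by
  have hsub : μ {ω | ∃ t' : ℕ, t ≤ t' ∧
        dGraph (A ω) t' u v ≤ ((2 * (Kfun τ t t' - MG) : ℕ) : ENNReal)} ≤
      μ ((⋃ q ∈ ({u, v} : Finset ℕ), {ω | ∃ t', t ≤ t' ∧
          ∃ k ∈ Finset.range (Kfun τ t t' - MG + 1), (2 ≤ k ∨ t' = t) ∧ Ebad (A ω) ℓ t q k t'}) ∪
        {ω | ∃ t', t ≤ t' ∧ ∃ n ∈ Finset.range (2 * (Kfun τ t t' - MG) + 1),
          (2 ≤ n ∨ t' = t) ∧ Eshort (A ω) ℓ t u v n t'}) := by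
    apply measure_mono_ae
    filter_upwards [hA] with ω hG hω
    obtain ⟨t', h1, h2⟩ := hω
    rcases pointwise_aux hG t u v hu hv huv ℓ hℓ (fun t' => Kfun τ t t' - MG)
      (fun a b ha hab => Nat.sub_le_sub_right (Kfun_anti τ t a b ht ha hab) _)
      ⟨t', h1, dGraph_le h2⟩ with ⟨q, hq, h⟩ | h
    · exact Or.inl (Set.mem_biUnion (x := q) hq h)
    · exact Or.inr h
  refine hsub.trans ((measure_union_le _ _).trans (add_le_add ?_ ?_))
  · refine (measure_biUnion_finset_le _ _).trans (Finset.sum_le_sum fun q _ => ?_)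
    exact aux_measure μ t (fun t' => Kfun τ t t' - MG + 1) (fun k t' ω => Ebad (A ω) ℓ t q k t')
  · exact aux_measure μ t (fun t' => 2 * (Kfun τ t t' - MG) + 1)
      (fun n t' ω => Eshort (A ω) ℓ t u v n t')

end
end

section
/- Let γ∈(1/2,1) and ν>0. Then there exists c>1 (depending only on γ and ν) such that the following holds for every t≥1, every t'≥t, and every birth-threshold array (ℓ_{k,t'})_{k≥0,t'≥t} with η_{j,t'}:=t'/ℓ_{j,t'}≥e for all j≥0: with the sequences α,β,φ,ψ defined by the recursions in the context (with these constants c and ν), for all i≥0, j≥1 and all x∈[t']: f_{[i,i+j)}^{(t,t')}(t',x) ≤ x^{−γ}·φ_{[i,i+j)} + 1{x>ℓ_{i+j−1,t'}}·x^{γ−1}·ψ_{[i,i+j)}; and for every vertex q with ℓ_{0,t'}≤q≤t' and every j≥1, x∈[t']: f_{[0,j)}^{(t,t')}(q,x) ≤ 1{x<t'}·x^{−γ}·α_{[0,j)} + 1{x>ℓ_{j−1,t'}}·x^{γ−1}·β_{[0,j)}. -/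
open MeasureTheory ProbabilityTheory Real Filter Finset

noncomputable section

def w0 (ν γ : ℝ) (z x : ℕ) : ℝ :=
  ν * ((min z x : ℕ) : ℝ) ^ (-γ) * ((max z x : ℕ) : ℝ) ^ (γ - 1)

def w1 (ν γ : ℝ) (z x : ℕ) : ℝ := if z = x then 0 else w0 ν γ z x

lemma w0_nonneg (ν γ : ℝ) (hν : 0 < ν) (z x : ℕ) : 0 ≤ w0 ν γ z x := by
  unfold w0; positivity

lemma w1_nonneg (ν γ : ℝ) (hν : 0 < ν) (z x : ℕ) : 0 ≤ w1 ν γ z x := by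
  unfold w1; split_ifs
  · exact le_rfl
  · exact w0_nonneg ν γ hν z x

lemma pfun_nonneg (ν γ : ℝ) (hν : 0 < ν) (l : List ℕ) : 0 ≤ pfun ν γ l := by
  unfold pfun
  split_ifs
  · apply List.prod_nonneg
    intro a ha
    rw [List.mem_map] at ha
    obtain ⟨q, _, rfl⟩ := ha
    positivity
  · exact le_rfl

lemma zip_prod_snoc (f : ℕ × ℕ → ℝ) (l : List ℕ) (z x : ℕ) :
    (((l ++ [z, x]).zip (l ++ [z, x]).tail).map f).prod =
      (((l ++ [z]).zip (l ++ [z]).tail).map f).prod * f (z, x) := by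
  induction l with
  | nil => simp
  | cons a l ih =>
    cases l with
    | nil => simp
    | cons b l =>
      simp only [List.cons_append, List.tail_cons, List.zip_cons_cons, List.map_cons,
        List.prod_cons] at ih ⊢
      rw [ih]; ring

lemma pfun_snoc_le (ν γ : ℝ) (hν : 0 < ν) (l : List ℕ) (z x : ℕ) :
    pfun ν γ (l ++ [z, x]) ≤ pfun ν γ (l ++ [z]) * w1 ν γ z x := by
  by_cases h : (l ++ [z, x]).Nodup
  · have h1 : (l ++ [z]).Nodup := by
      have : l ++ [z, x] = (l ++ [z]) ++ [x] := by simp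
      rw [this] at h
      exact h.of_append_left
    have h2 : z ≠ x := by
      have := h.of_append_right
      simpa using this
    unfold pfun w1
    rw [if_pos h, if_pos h1, if_neg h2, zip_prod_snoc]
    exact le_of_eq rfl
  · have : pfun ν γ (l ++ [z, x]) = 0 := by unfold pfun; rw [if_neg h]
    rw [this]
    exact mul_nonneg (pfun_nonneg ν γ hν _) (w1_nonneg ν γ hν _ _)

def Ffun (ν γ : ℝ) (ℓt : ℕ → ℕ) (t' i n y x : ℕ) : ℝ :=
  ∑ g ∈ Fintype.piFinset (fun _ : Fin n => Finset.Icc 1 t'),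
    if ∀ j : Fin n, ℓt (i + 1 + (j : ℕ)) ≤ g j then
      pfun ν γ (y :: (List.ofFn g ++ [x]))
    else 0

lemma ffun_eq (ν γ : ℝ) (ℓt : ℕ → ℕ) (t' i k n y x : ℕ) (h : k - i - 1 = n) :
    ffun ν γ ℓt t' i k y x = Ffun ν γ ℓt t' i n y x := by
  subst h; rfl

lemma Ffun_zero (ν γ : ℝ) (ℓt : ℕ → ℕ) (t' i y x : ℕ) :
    Ffun ν γ ℓt t' i 0 y x = w1 ν γ y x := by
  simp [Ffun, pfun, w1, w0]

lemma Ffun_succ (ν γ : ℝ) (hν : 0 < ν) (ℓt : ℕ → ℕ) (t' i n y x : ℕ) (hl : 1 ≤ ℓt (i + 1 + n)) :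
    Ffun ν γ ℓt t' i (n + 1) y x ≤
      ∑ z ∈ Finset.Icc (ℓt (i + 1 + n)) t', Ffun ν γ ℓt t' i n y z * w1 ν γ z x := by
  have key : Ffun ν γ ℓt t' i (n + 1) y x =
      ∑ p ∈ (Finset.Icc 1 t') ×ˢ Fintype.piFinset (fun _ : Fin n => Finset.Icc 1 t'),
        if ℓt (i + 1 + n) ≤ p.1 then
          (if ∀ j : Fin n, ℓt (i + 1 + (j : ℕ)) ≤ p.2 j then
            pfun ν γ ((y :: List.ofFn p.2) ++ [p.1, x]) else 0) else 0 := by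
    unfold Ffun
    refine Finset.sum_nbij' (fun g => (g (Fin.last n), fun j => g j.castSucc))
      (fun p => Fin.snoc (α := fun _ => ℕ) p.2 p.1) ?_ ?_ ?_ ?_ ?_
    · intro g hg
      simp only [Fintype.mem_piFinset, Finset.mem_product] at hg ⊢
      exact ⟨hg _, fun j => hg _⟩
    · intro p hp
      simp only [Fintype.mem_piFinset, Finset.mem_product] at hp ⊢
      intro j
      refine Fin.lastCases ?_ (fun j => ?_) j
      · simpa using hp.1
      · simpa using hp.2 j
    · intro g hg
      funext j
      refine Fin.lastCases ?_ (fun j => ?_) j <;> simp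
    · intro p hp
      simp
    · intro g hg
      rw [List.ofFn_succ']
      simp only [Fin.forall_fin_succ', List.concat_eq_append, List.append_assoc, Fin.val_castSucc,
        Fin.val_last, List.cons_append, List.nil_append]
      by_cases h1 : ℓt (i + 1 + n) ≤ g (Fin.last n)
      · simp [h1]
      · simp [h1]
  rw [key, Finset.sum_product]
  have sub : Finset.Icc (ℓt (i + 1 + n)) t' = (Finset.Icc 1 t').filter (fun z => ℓt (i+1+n) ≤ z) := by
    ext z; simp only [Finset.mem_Icc, Finset.mem_filter]; omega
  rw [sub, Finset.sum_filter]
  apply Finset.sum_le_sum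
  intro z hz
  by_cases h1 : ℓt (i + 1 + n) ≤ z
  · simp only [h1, if_true]
    unfold Ffun
    rw [Finset.sum_mul]
    apply Finset.sum_le_sum
    intro g hg
    split_ifs
    · exact pfun_snoc_le ν γ hν (y :: List.ofFn g) z x
    · simp
  · simp [h1]

lemma sum_inv_le (L T : ℕ) (hL : 1 ≤ L) (hT : L ≤ T) :
    ∑ z ∈ Finset.Icc L T, (z : ℝ)⁻¹ ≤ 1 + Real.log ((T : ℝ) / L) := by
  induction T, hT using Nat.le_induction with
  | base =>
    have : (1:ℝ) ≤ L := by exact_mod_cast hL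
    simp only [Finset.Icc_self, Finset.sum_singleton]
    rw [div_self (by positivity), Real.log_one, add_zero]
    exact inv_le_one_of_one_le₀ this
  | succ n hn ih =>
    rw [Finset.sum_Icc_succ_top (by omega)]
    have hL' : (0:ℝ) < L := by exact_mod_cast hL
    have hn' : (0:ℝ) < n := by exact_mod_cast (by omega : 0 < n)
    rw [Real.log_div (by positivity) (by positivity)] at ih ⊢
    have := Real.log_le_sub_one_of_pos (show (0:ℝ) < n / (n+1) by positivity)
    rw [Real.log_div (by positivity) (by positivity)] at this
    have e : (n:ℝ) / (n+1) - 1 = - (n+1 : ℝ)⁻¹ := by field_simp; ring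
    push_cast
    linarith

lemma bern (s : ℝ) (hs0 : 0 < s) (hs1 : s < 1) (n : ℕ) (hn : 1 ≤ n) :
    (n : ℝ) ^ s ≤ (1 - s / (n + 1)) * ((n:ℝ) + 1) ^ s := by
  have hn' : (0:ℝ) < n := by exact_mod_cast hn
  have h := _root_.rpow_one_add_le_one_add_mul_self (s := -1/((n:ℝ)+1)) (p := s)
    (by rw [le_div_iff₀ (by positivity)]; linarith) hs0.le hs1.le
  have e : 1 + -1/((n:ℝ)+1) = n / (n+1) := by field_simp; ring
  rw [e, Real.div_rpow (by positivity) (by positivity), div_le_iff₀ (by positivity)] at h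
  calc _ ≤ _ := h
    _ = _ := by ring

lemma sum_pow_le (s : ℝ) (hs0 : 0 < s) (hs1 : s < 1) (L T : ℕ) (hL : 1 ≤ L) (hT : L ≤ T) :
    ∑ z ∈ Finset.Icc L T, (z : ℝ) ^ (s - 1) ≤ (T:ℝ) ^ s * (1 / s) := by
  induction T, hT using Nat.le_induction with
  | base =>
    have h1 : (1:ℝ) ≤ L := by exact_mod_cast hL
    simp only [Finset.Icc_self, Finset.sum_singleton]
    calc (L:ℝ)^(s-1) ≤ (L:ℝ)^s * 1 := by
          rw [mul_one]; exact Real.rpow_le_rpow_of_exponent_le h1 (by linarith)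
      _ ≤ _ := by
        gcongr
        rw [le_div_iff₀ hs0]; linarith
  | succ n hn ih =>
    rw [Finset.sum_Icc_succ_top (by omega)]
    have hb := bern s hs0 hs1 n (by omega)
    push_cast
    rw [Real.rpow_sub_one (by positivity)]
    have : (n:ℝ)^s * (1/s) ≤ ((1 - s / (n + 1)) * ((n:ℝ) + 1) ^ s) * (1/s) := by gcongr
    have e : ((1 - s / (n + 1)) * ((n:ℝ) + 1) ^ s) * (1/s) =
      ((n:ℝ) + 1) ^ s * (1/s) - ((n:ℝ) + 1) ^ s / (n+1) := by field_simp
    linarith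

lemma sum_neg_le (s : ℝ) (hs0 : 0 < s) (hs1 : s < 1) (L T : ℕ) (hL : 1 ≤ L) (hT : L ≤ T) :
    ∑ z ∈ Finset.Icc L T, (z : ℝ) ^ (-s - 1) ≤
      (L:ℝ) ^ (-s) * (1 + 1 / s) - (T:ℝ) ^ (-s) * (1 / s) := by
  induction T, hT using Nat.le_induction with
  | base =>
    have h1 : (1:ℝ) ≤ L := by exact_mod_cast hL
    simp only [Finset.Icc_self, Finset.sum_singleton]
    have : (L:ℝ)^(-s-1) ≤ (L:ℝ)^(-s) := Real.rpow_le_rpow_of_exponent_le h1 (by linarith)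
    linarith
  | succ n hn ih =>
    rw [Finset.sum_Icc_succ_top (by omega)]
    have hn' : (0:ℝ) < n := by exact_mod_cast (by omega : 0 < n)
    have hb := bern s hs0 hs1 n (by omega)
    push_cast
    rw [Real.rpow_sub_one (by positivity)]
    have hb2 : ((n:ℝ)+1)^(-s) * (1 + s/(n+1)) ≤ (n:ℝ)^(-s) := by
      rw [Real.rpow_neg (by positivity), Real.rpow_neg (by positivity)]
      rw [inv_mul_le_iff₀ (by positivity), ← div_eq_mul_inv, le_div_iff₀ (by positivity)]
      calc (1 + s/((n:ℝ)+1)) * (n:ℝ)^s ≤ (1 + s/((n:ℝ)+1)) * ((1 - s / (n + 1)) * ((n:ℝ) + 1) ^ s) := by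
            gcongr
        _ = (1 - (s/((n:ℝ)+1))^2) * ((n:ℝ)+1)^s := by ring
        _ ≤ 1 * ((n:ℝ)+1)^s := by
          gcongr
          nlinarith [sq_nonneg (s/((n:ℝ)+1))]
        _ = _ := one_mul _
    have : ((n:ℝ)+1)^(-s) * (1 + s/(n+1)) * (1/s) ≤ (n:ℝ)^(-s) * (1/s) := by gcongr
    have e : ((n:ℝ)+1)^(-s) * (1 + s/(n+1)) * (1/s) =
      ((n:ℝ)+1)^(-s) * (1/s) + ((n:ℝ)+1)^(-s) / (n+1) := by field_simp
    linarith

lemma step (γ ν : ℝ) (hγ0 : 1 / 2 < γ) (hγ1 : γ < 1) (hν : 0 < ν) (c : ℝ)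
    (hc : ν * (2 + 1 / (2 * γ - 1)) ≤ c) (T L x : ℕ) (hL : 1 ≤ L)
    (hη : Real.exp 1 ≤ (T : ℝ) / L) (hx1 : 1 ≤ x) (hx2 : x ≤ T) (f : ℕ → ℝ) (A B : ℝ)
    (hA : 0 ≤ A) (hB : 0 ≤ B)
    (hf : ∀ z : ℕ, 1 ≤ z → z ≤ T → f z ≤ (z:ℝ) ^ (-γ) * A + (z:ℝ) ^ (γ - 1) * B) :
    ∑ z ∈ Finset.Icc L T, f z * w1 ν γ z x ≤
      (if x < T then (x:ℝ) ^ (-γ) *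
        (c * (A * Real.log ((T:ℝ) / L) + B * (T:ℝ) ^ (2 * γ - 1))) else 0) +
      (if L < x then (x:ℝ) ^ (γ - 1) *
        (c * (A * (L:ℝ) ^ (1 - 2 * γ) + B * Real.log ((T:ℝ) / L))) else 0) := by
  have hL' : (0:ℝ) < L := by exact_mod_cast hL
  have hLT : L ≤ T := by
    have h1 : (1:ℝ) ≤ (T:ℝ) / L := le_trans (by have := Real.add_one_le_exp 1; linarith) hη
    rw [le_div_iff₀ hL', one_mul] at h1
    exact_mod_cast h1
  have hlog : 1 ≤ Real.log ((T:ℝ) / L) := by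
    rw [← Real.log_exp 1]; exact Real.log_le_log (Real.exp_pos 1) hη
  have hs0 : 0 < 2 * γ - 1 := by linarith
  have hs1 : 2 * γ - 1 < 1 := by linarith
  have hinv : (0:ℝ) < 1 / (2 * γ - 1) := by positivity
  set K : ℝ := 2 + 1 / (2 * γ - 1) with hK
  have S1 : ∑ z ∈ Finset.Icc L T, (z : ℝ)⁻¹ ≤ K * Real.log ((T:ℝ) / L) := by
    have := sum_inv_le L T hL hLT
    nlinarith
  have S2 : ∑ z ∈ Finset.Icc L T, (z : ℝ) ^ (2 * γ - 1 - 1) ≤ K * (T:ℝ) ^ (2 * γ - 1) := by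
    have := sum_pow_le _ hs0 hs1 L T hL hLT
    have : (0:ℝ) ≤ (T:ℝ) ^ (2 * γ - 1) := by positivity
    nlinarith
  have S3 : ∑ z ∈ Finset.Icc L T, (z : ℝ) ^ (-(2 * γ - 1) - 1) ≤ K * (L:ℝ) ^ (1 - 2 * γ) := by
    have h := sum_neg_le _ hs0 hs1 L T hL hLT
    have h1 : (0:ℝ) ≤ (T:ℝ) ^ (-(2 * γ - 1)) * (1 / (2 * γ - 1)) := by positivity
    have h2 : (0:ℝ) ≤ (L:ℝ) ^ (-(2 * γ - 1)) := by positivity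
    rw [show 1 - 2 * γ = -(2 * γ - 1) by ring]
    nlinarith
  have P1 : ∀ z ∈ Finset.Icc L T, f z * w1 ν γ z x ≤
      (if x < T then (x:ℝ) ^ (-γ) *
        (ν * (A * (z:ℝ)⁻¹ + B * (z:ℝ) ^ (2 * γ - 1 - 1))) else 0) +
      (if L < x then (x:ℝ) ^ (γ - 1) *
        (ν * (A * (z:ℝ) ^ (-(2 * γ - 1) - 1) + B * (z:ℝ)⁻¹)) else 0) := by
    intro z hz
    rw [Finset.mem_Icc] at hz
    have hz0 : (0:ℝ) < z := by exact_mod_cast (by omega : 0 < z)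
    have n1 : 0 ≤ (if x < T then (x:ℝ) ^ (-γ) *
        (ν * (A * (z:ℝ)⁻¹ + B * (z:ℝ) ^ (2 * γ - 1 - 1))) else 0) := by
      split_ifs <;> positivity
    have n2 : 0 ≤ (if L < x then (x:ℝ) ^ (γ - 1) *
        (ν * (A * (z:ℝ) ^ (-(2 * γ - 1) - 1) + B * (z:ℝ)⁻¹)) else 0) := by
      split_ifs <;> positivity
    have hfz := mul_le_mul_of_nonneg_right (hf z (by omega) hz.2) (w1_nonneg ν γ hν z x)
    refine hfz.trans ?_
    have e1 : (z:ℝ) ^ (-γ) * (z:ℝ) ^ (γ - 1) = (z:ℝ)⁻¹ := by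
      rw [← Real.rpow_add hz0, ← Real.rpow_neg_one]; ring_nf
    have e2 : (z:ℝ) ^ (γ - 1) * (z:ℝ) ^ (γ - 1) = (z:ℝ) ^ (2 * γ - 1 - 1) := by
      rw [← Real.rpow_add hz0]; ring_nf
    have e3 : (z:ℝ) ^ (-γ) * (z:ℝ) ^ (-γ) = (z:ℝ) ^ (-(2 * γ - 1) - 1) := by
      rw [← Real.rpow_add hz0]; ring_nf
    rcases lt_trichotomy z x with h | h | h
    · have hw : w1 ν γ z x = ν * (z:ℝ) ^ (-γ) * (x:ℝ) ^ (γ - 1) := by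
        unfold w1 w0; rw [if_neg h.ne, min_eq_left h.le, max_eq_right h.le]
      rw [if_pos (show L < x by omega), hw, ← e3, ← e1]
      rw [← e1] at n1
      refine le_trans (le_of_eq ?_) (le_add_of_nonneg_left n1)
      ring
    · have hw : w1 ν γ z x = 0 := by unfold w1; rw [if_pos h]
      rw [hw, mul_zero]; positivity
    · have hw : w1 ν γ z x = ν * (x:ℝ) ^ (-γ) * (z:ℝ) ^ (γ - 1) := by
        unfold w1 w0; rw [if_neg h.ne', min_eq_right h.le, max_eq_left h.le]
      rw [if_pos (show x < T by omega), hw, ← e2, ← e1]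
      rw [← e1] at n2
      refine le_trans (le_of_eq ?_) (le_add_of_nonneg_right n2)
      ring
  refine (Finset.sum_le_sum P1).trans ?_
  rw [Finset.sum_add_distrib]
  have hlog0 : 0 ≤ Real.log ((T:ℝ) / L) := by linarith
  apply add_le_add
  · split_ifs
    · rw [← Finset.mul_sum, ← Finset.mul_sum, Finset.sum_add_distrib, ← Finset.mul_sum,
        ← Finset.mul_sum]
      refine mul_le_mul_of_nonneg_left ?_ (by positivity)
      calc _ ≤ ν * (A * (K * Real.log ((T:ℝ) / L)) + B * (K * (T:ℝ) ^ (2 * γ - 1))) := by gcongr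
        _ = (ν * K) * (A * Real.log ((T:ℝ) / L) + B * (T:ℝ) ^ (2 * γ - 1)) := by ring
        _ ≤ _ := by gcongr
    · simp
  · split_ifs
    · rw [← Finset.mul_sum, ← Finset.mul_sum, Finset.sum_add_distrib, ← Finset.mul_sum,
        ← Finset.mul_sum]
      refine mul_le_mul_of_nonneg_left ?_ (by positivity)
      calc _ ≤ ν * (A * (K * (L:ℝ) ^ (1 - 2 * γ)) + B * (K * Real.log ((T:ℝ) / L))) := by gcongr
        _ = (ν * K) * (A * (L:ℝ) ^ (1 - 2 * γ) + B * Real.log ((T:ℝ) / L)) := by ring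
        _ ≤ _ := by gcongr
    · simp

lemma abRec_nonneg (c ν γ : ℝ) (hc : 0 ≤ c) (hν : 0 < ν) (ℓt : ℕ → ℕ) (t' : ℕ)
    (hlog : ∀ j, 0 ≤ Real.log ((t' : ℝ) / ℓt j)) (j : ℕ) :
    0 ≤ (abRec c ν γ ℓt t' (j + 1)).1 ∧ 0 ≤ (abRec c ν γ ℓt t' (j + 1)).2 := by
  induction j with
  | zero => constructor <;> simp only [abRec] <;> positivity
  | succ j ih =>
    obtain ⟨h1, h2⟩ := ih
    have := hlog (j + 1)
    constructor <;> simp only [abRec] <;> positivity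

lemma ppRec_nonneg (c ν γ : ℝ) (hc : 0 ≤ c) (hν : 0 < ν) (ℓt : ℕ → ℕ) (t' i : ℕ)
    (hlog : ∀ j, 0 ≤ Real.log ((t' : ℝ) / ℓt j)) (j : ℕ) :
    0 ≤ (ppRec c ν γ ℓt t' i (j + 1)).1 ∧ 0 ≤ (ppRec c ν γ ℓt t' i (j + 1)).2 := by
  induction j with
  | zero => constructor <;> simp only [ppRec] <;> positivity
  | succ j ih =>
    obtain ⟨h1, h2⟩ := ih
    have := hlog (i + j + 1)
    constructor <;> simp only [ppRec] <;> positivity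

/-- **Lemma 3.12** (recursive bounds for the number of paths): for `γ ∈ (1/2,1)`
and `ν > 0` there is `c > 1` such that the path-counting functions `f` are bounded
by the recursively defined sequences `φ, ψ` (paths emanating from `t'`) and
`α, β` (paths emanating from a vertex `q`). -/
theorem recursive_bounds_number_of_paths
    (γ ν : ℝ) (hγ0 : 1 / 2 < γ) (hγ1 : γ < 1) (hν : 0 < ν) :
    ∃ c : ℝ, 1 < c ∧
      ∀ t t' : ℕ, 1 ≤ t → t ≤ t' →
        ∀ ℓ : ℕ → ℕ → ℕ, BirthArray t ℓ →
          (∀ j : ℕ, Real.exp 1 ≤ (t' : ℝ) / ℓ j t') →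
          (∀ i j x : ℕ, 1 ≤ j → 1 ≤ x → x ≤ t' →
            ffun ν γ (fun k => ℓ k t') t' i (i + j) t' x ≤
              (x : ℝ) ^ (-γ) * (ppRec c ν γ (fun k => ℓ k t') t' i j).1 +
              (if ℓ (i + j - 1) t' < x then
                (x : ℝ) ^ (γ - 1) * (ppRec c ν γ (fun k => ℓ k t') t' i j).2
              else 0)) ∧
          (∀ q j x : ℕ, ℓ 0 t' ≤ q → q ≤ t' → 1 ≤ j → 1 ≤ x → x ≤ t' →
            ffun ν γ (fun k => ℓ k t') t' 0 j q x ≤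
              (if x < t' then
                (x : ℝ) ^ (-γ) * (abRec c ν γ (fun k => ℓ k t') t' j).1
              else 0) +
              (if ℓ (j - 1) t' < x then
                (x : ℝ) ^ (γ - 1) * (abRec c ν γ (fun k => ℓ k t') t' j).2
              else 0)) := by
  have hinv : (0:ℝ) < 1 / (2 * γ - 1) := by
    have : 0 < 2 * γ - 1 := by linarith
    positivity
  have hcK : ν * (2 + 1 / (2 * γ - 1)) ≤ 1 + ν * (2 + 1 / (2 * γ - 1)) := by linarith
  have hc1 : 1 < 1 + ν * (2 + 1 / (2 * γ - 1)) := by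
    have : 0 < ν * (2 + 1 / (2 * γ - 1)) := by positivity
    linarith
  refine ⟨1 + ν * (2 + 1 / (2 * γ - 1)), hc1, ?_⟩
  generalize 1 + ν * (2 + 1 / (2 * γ - 1)) = c at hcK hc1
  intro t t' ht htt ℓ hℓ hη
  obtain ⟨hpos, -, -, -⟩ := hℓ
  replace hpos : ∀ k, 1 ≤ (fun k => ℓ k t') k := fun k => hpos k t' htt
  replace hη : ∀ k, Real.exp 1 ≤ (t' : ℝ) / ((fun k => ℓ k t') k : ℕ) := hη
  obtain ⟨m, hm⟩ : ∃ m : ℕ → ℕ, m = fun k => ℓ k t' := ⟨_, rfl⟩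
  have hbr : ∀ k, ℓ k t' = m k := fun k => by rw [hm]
  rw [← hm] at hpos hη ⊢
  simp only [hbr]
  clear hbr hm
  have hlog : ∀ j, 0 ≤ Real.log ((t' : ℝ) / m j) := fun j =>
    Real.log_nonneg (le_trans (by have := Real.add_one_le_exp 1; linarith) (hη j))
  constructor
  · intro i j x hj
    obtain ⟨n, rfl⟩ : ∃ n, j = n + 1 := ⟨j - 1, by omega⟩
    clear hj
    rw [ffun_eq ν γ m t' i (i + (n + 1)) n t' x (by omega)]
    rw [show i + (n + 1) - 1 = i + n by omega]
    induction n generalizing x with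
    | zero =>
      intro hx1 hx2
      rw [Ffun_zero]
      simp only [ppRec, mul_zero, ite_self, add_zero]
      unfold w1
      split_ifs with h
      · positivity
      · unfold w0
        rw [min_eq_right hx2, max_eq_left hx2]
        apply le_of_eq; ring
    | succ n ih =>
      intro hx1 hx2
      obtain ⟨hA, hB⟩ := ppRec_nonneg c ν γ (by linarith) hν m t' i hlog n
      have e : i + 1 + n = i + n + 1 := by omega
      refine (Ffun_succ ν γ hν m t' i n t' x (hpos _)).trans ?_
      refine (step γ ν hγ0 hγ1 hν c hcK t' (m (i + 1 + n)) x (hpos _) (hη _) hx1 hx2 _ _ _ hA hB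
        ?_).trans ?_
      · intro z hz1 hz2
        refine (ih z hz1 hz2).trans ?_
        gcongr
        split_ifs
        · exact le_rfl
        · positivity
      · rw [e, show i + (n + 1) = i + n + 1 by omega]
        simp only [ppRec]
        gcongr
        have := hlog (i + n + 1)
        split_ifs
        · exact le_rfl
        · positivity
  · intro q j x hq1 hq2 hj
    obtain ⟨n, rfl⟩ : ∃ n, j = n + 1 := ⟨j - 1, by omega⟩
    clear hj
    rw [ffun_eq ν γ m t' 0 (n + 1) n q x (by omega)]
    rw [show n + 1 - 1 = n by omega]
    have hm0 : (0:ℝ) < m 0 := by exact_mod_cast hpos 0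
    have hmq : (m 0 : ℝ) ≤ q := by exact_mod_cast hq1
    induction n generalizing x with
    | zero =>
      intro hx1 hx2
      rw [Ffun_zero]
      simp only [abRec, zero_add]
      have n1 : 0 ≤ (if x < t' then (x:ℝ) ^ (-γ) * (ν * (m 0:ℝ) ^ (γ - 1)) else 0) := by
        split_ifs <;> positivity
      have n2 : 0 ≤ (if m 0 < x then (x:ℝ) ^ (γ - 1) * (ν * (m 0:ℝ) ^ (-γ)) else 0) := by
        split_ifs <;> positivity
      unfold w1 w0
      rcases lt_trichotomy q x with h | h | h
      · rw [if_neg h.ne, min_eq_left h.le, max_eq_right h.le]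
        rw [if_pos (show m 0 < x by omega)]
        refine le_trans ?_ (le_add_of_nonneg_left n1)
        have : (q:ℝ) ^ (-γ) ≤ (m 0:ℝ) ^ (-γ) :=
          Real.rpow_le_rpow_of_nonpos hm0 hmq (by linarith)
        calc _ ≤ ν * (m 0:ℝ) ^ (-γ) * (x:ℝ) ^ (γ - 1) := by gcongr
          _ = _ := by ring
      · rw [if_pos h]; positivity
      · rw [if_neg h.ne', min_eq_right h.le, max_eq_left h.le]
        rw [if_pos (show x < t' by omega)]
        refine le_trans ?_ (le_add_of_nonneg_right n2)
        have : (q:ℝ) ^ (γ - 1) ≤ (m 0:ℝ) ^ (γ - 1) :=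
          Real.rpow_le_rpow_of_nonpos hm0 hmq (by linarith)
        calc _ ≤ ν * (x:ℝ) ^ (-γ) * (m 0:ℝ) ^ (γ - 1) := by gcongr
          _ = _ := by ring
    | succ n ih =>
      intro hx1 hx2
      obtain ⟨hA, hB⟩ := abRec_nonneg c ν γ (by linarith) hν m t' hlog n
      have e : 0 + 1 + n = n + 1 := by omega
      refine (Ffun_succ ν γ hν m t' 0 n q x (hpos _)).trans ?_
      refine (step γ ν hγ0 hγ1 hν c hcK t' (m (0 + 1 + n)) x (hpos _) (hη _) hx1 hx2 _ _ _ hA hB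
        ?_).trans ?_
      · intro z hz1 hz2
        refine (ih z hz1 hz2).trans ?_
        apply add_le_add
        · split_ifs
          · exact le_rfl
          · positivity
        · split_ifs
          · exact le_rfl
          · positivity
      · rw [e]
        simp only [abRec]
        exact le_rfl

end
end

section
/- Let γ∈(1/2,1), ν>0, c>1, let t≥1, t'≥t, and let (ℓ_{k,t'})_{k≥0,t'≥t} be a birth-threshold array with η_{j,t'}:=t'/ℓ_{j,t'}≥e for all j≥0, and let the sequences α_{[0,k)}, β_{[0,k)}, φ_{[i,k)}, ψ_{[i,k)} be defined by the recursions in the context. Then there exists C>0 (depending only on c, ν, γ) such that for all k≥2: Σ_{i=1}^{k−1} β_{[0,i)}·ψ_{[i,k)} ≤ C·(k−2)·β_{[0,k)}·t'^{−γ}, and Σ_{i=1}^{k−1} β_{[0,i)}·φ_{[i,k)} ≤ C·(k−1)·α_{[0,k)}·t'^{−γ}. -/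
open MeasureTheory ProbabilityTheory Real Filter Finset

noncomputable section

theorem ab_nonneg (c ν γ : ℝ) (hν : 0 < ν) (hc : 1 < c) (l : ℕ → ℕ) (t' : ℕ)
    (hL : ∀ j, 0 ≤ Real.log ((t' : ℝ) / l j)) (n : ℕ) :
    0 ≤ (abRec c ν γ l t' (n + 1)).1 ∧ 0 ≤ (abRec c ν γ l t' (n + 1)).2 := by
  induction n with
  | zero => simp only [abRec]; constructor <;> positivity
  | succ n ih =>
    obtain ⟨h1, h2⟩ := ih
    have := hL (n + 1)
    simp only [abRec]
    constructor <;> positivity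

theorem conv_term (c ν γ : ℝ) (hν : 0 < ν) (hc : 1 < c) (l : ℕ → ℕ) (t' : ℕ)
    (ht : 0 < (t' : ℝ))
    (hL : ∀ j, 0 ≤ Real.log ((t' : ℝ) / l j)) (i j : ℕ) :
    (abRec c ν γ l t' (i + 1)).2 * (ppRec c ν γ l t' (i + 1) (j + 1)).1 ≤
      ν * (t' : ℝ) ^ (-γ) * (abRec c ν γ l t' (i + 1 + j + 1)).1 ∧
    (abRec c ν γ l t' (i + 1)).2 * (ppRec c ν γ l t' (i + 1) (j + 1)).2 ≤
      ν * (t' : ℝ) ^ (-γ) * (abRec c ν γ l t' (i + 1 + j + 1)).2 := by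
  induction j with
  | zero =>
    obtain ⟨h1, h2⟩ := ab_nonneg c ν γ hν hc l t' hL i
    obtain ⟨h3, h4⟩ := ab_nonneg c ν γ hν hc l t' hL (i + 1)
    constructor
    · have hT : (t' : ℝ) ^ (γ - 1) = (t' : ℝ) ^ (-γ) * (t' : ℝ) ^ (2 * γ - 1) := by
        rw [← Real.rpow_add ht]; congr 1; ring
      have hl := hL (i + 1)
      simp only [abRec, ppRec, Nat.add_zero, zero_add]
      rw [hT]
      generalize (abRec c ν γ l t' (i + 1)).2 = b at *
      generalize (abRec c ν γ l t' (i + 1)).1 = a at *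
      have hb : b * (t' : ℝ) ^ (2 * γ - 1) ≤
          c * (a * Real.log ((t' : ℝ) / l (i + 1)) + b * (t' : ℝ) ^ (2 * γ - 1)) := by
        have e1 : 0 ≤ a * Real.log ((t' : ℝ) / l (i + 1)) := by positivity
        have e2 : 0 ≤ b * (t' : ℝ) ^ (2 * γ - 1) := by positivity
        nlinarith
      calc _ = ν * (t' : ℝ) ^ (-γ) * (b * (t' : ℝ) ^ (2 * γ - 1)) := by ring
        _ ≤ _ := by gcongr
    · simp only [ppRec, zero_add, mul_zero, Nat.add_zero]
      positivity
  | succ j ih =>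
    obtain ⟨h1, h2⟩ := ih
    have hl := hL (i + 1 + j + 1)
    have ea : abRec c ν γ l t' (i + 1 + (j + 1) + 1) = abRec c ν γ l t' ((i + 1 + j) + 2) := rfl
    rw [ea]
    simp only [abRec, ppRec]
    have hc0 : 0 ≤ c := by linarith
    have hTT : 0 ≤ (t' : ℝ) ^ (2 * γ - 1) := by positivity
    have hm : 0 ≤ (l (i + 1 + j + 1) : ℝ) ^ (1 - 2 * γ) := by positivity
    generalize (abRec c ν γ l t' (i + 1)).2 = b at *
    generalize (abRec c ν γ l t' (i + 1 + j + 1)).2 = B at *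
    generalize (abRec c ν γ l t' (i + 1 + j + 1)).1 = A at *
    generalize (ppRec c ν γ l t' (i + 1) (j + 1)).1 = f at *
    generalize (ppRec c ν γ l t' (i + 1) (j + 1)).2 = g at *
    generalize (t' : ℝ) ^ (2 * γ - 1) = T at *
    generalize (l (i + 1 + j + 1) : ℝ) ^ (1 - 2 * γ) = m at *
    generalize Real.log ((t' : ℝ) / l (i + 1 + j + 1)) = L at *
    generalize ν * (t' : ℝ) ^ (-γ) = D at *
    constructor
    · calc _ = c * ((b * f) * L + (b * g) * T) := by ring
        _ ≤ c * ((D * A) * L + (D * B) * T) := by gcongr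
        _ = _ := by ring
    · calc _ = c * ((b * f) * m + (b * g) * L) := by ring
        _ ≤ c * ((D * A) * m + (D * B) * L) := by gcongr
        _ = _ := by ring

/-- **Lemma 3.12'** (convolution bounds): there is `C > 0`, depending only on
`c, ν, γ`, bounding the convolutions `Σ_i β_{[0,i)}ψ_{[i,k)}` and
`Σ_i β_{[0,i)}φ_{[i,k)}` in terms of `β_{[0,k)}` and `α_{[0,k)}`. -/
theorem convolution_bounds
    (γ ν c : ℝ) (hγ0 : 1 / 2 < γ) (hγ1 : γ < 1) (hν : 0 < ν) (hc : 1 < c) :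
    ∃ C : ℝ, 0 < C ∧
      ∀ t t' : ℕ, 1 ≤ t → t ≤ t' →
        ∀ ℓ : ℕ → ℕ → ℕ, BirthArray t ℓ →
          (∀ j : ℕ, Real.exp 1 ≤ (t' : ℝ) / ℓ j t') →
          ∀ k : ℕ, 2 ≤ k →
            (∑ i ∈ Finset.Icc 1 (k - 1),
                (abRec c ν γ (fun j => ℓ j t') t' i).2 *
                (ppRec c ν γ (fun j => ℓ j t') t' i (k - i)).2) ≤
              C * ((k : ℝ) - 2) * (abRec c ν γ (fun j => ℓ j t') t' k).2 *
                (t' : ℝ) ^ (-γ) ∧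
            (∑ i ∈ Finset.Icc 1 (k - 1),
                (abRec c ν γ (fun j => ℓ j t') t' i).2 *
                (ppRec c ν γ (fun j => ℓ j t') t' i (k - i)).1) ≤
              C * ((k : ℝ) - 1) * (abRec c ν γ (fun j => ℓ j t') t' k).1 *
                (t' : ℝ) ^ (-γ) := by
  refine ⟨ν, hν, ?_⟩
  intro t t' ht htt ℓ _ hη k hk
  have ht' : 0 < (t' : ℝ) := by exact_mod_cast (by omega : 0 < t')
  have hL : ∀ j, 0 ≤ Real.log ((t' : ℝ) / (fun j => ℓ j t') j) := fun j =>
    Real.log_nonneg (le_trans (by have := Real.add_one_le_exp 1; linarith) (hη j))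
  have key := conv_term c ν γ hν hc (fun j => ℓ j t') t' ht' hL
  obtain ⟨n, rfl⟩ : ∃ n, k = n + 2 := ⟨k - 2, by omega⟩
  have key' : ∀ i ∈ Finset.Icc 1 (n + 1), ∃ a j, i = a + 1 ∧ n + 2 - i = j + 1 ∧
      a + 1 + j + 1 = n + 2 := by
    intro i hi
    rw [Finset.mem_Icc] at hi
    exact ⟨i - 1, n + 1 - i, by omega, by omega, by omega⟩
  have e : n + 2 - 1 = n + 1 := rfl
  rw [e]
  constructor
  · rw [Finset.sum_Icc_succ_top (by omega)]
    have e2 : n + 2 - (n + 1) = 1 := by omega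
    rw [e2]
    have hs := Finset.sum_le_card_nsmul (Finset.Icc 1 n)
      (fun i => (abRec c ν γ (fun j => ℓ j t') t' i).2 *
        (ppRec c ν γ (fun j => ℓ j t') t' i (n + 2 - i)).2)
      (ν * (t' : ℝ) ^ (-γ) * (abRec c ν γ (fun j => ℓ j t') t' (n + 2)).2) (by
        intro i hi
        obtain ⟨a, j, rfl, h2, h3⟩ := key' i (Finset.Icc_subset_Icc_right (by omega) hi)
        have := (key a j).2
        rw [h3] at this
        simp only [h2]
        exact this)
    rw [Nat.card_Icc, nsmul_eq_mul] at hs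
    simp only [ppRec, mul_zero, add_zero]
    refine hs.trans (le_of_eq ?_)
    push_cast [Nat.add_sub_cancel]
    ring
  · have hs := Finset.sum_le_card_nsmul (Finset.Icc 1 (n + 1))
      (fun i => (abRec c ν γ (fun j => ℓ j t') t' i).2 *
        (ppRec c ν γ (fun j => ℓ j t') t' i (n + 2 - i)).1)
      (ν * (t' : ℝ) ^ (-γ) * (abRec c ν γ (fun j => ℓ j t') t' (n + 2)).1) (by
        intro i hi
        obtain ⟨a, j, rfl, h2, h3⟩ := key' i hi
        have := (key a j).1
        rw [h3] at this
        simp only [h2]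
        exact this)
    rw [Nat.card_Icc, nsmul_eq_mul] at hs
    refine hs.trans (le_of_eq ?_)
    push_cast [Nat.add_sub_cancel]
    ring

end
end
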